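/- In the consecutive prime power construction, define A_0 := I_{(q+1)q²}, A_1 := I_{q+1} ⊗ I_q ⊗ (J_q − I_q), A_2 := I_{q+1} ⊗ (J_q − I_q) ⊗ J_q, A_3 := (J_{q+1} − I_{q+1}) ⊗ I_{q²}, A_4 := (J_{q+1} − I_{q+1}) ⊗ I_q ⊗ (J_q − I_q), and A_{5,β} := N_β − A_3 for each nonzero β ∈ K. Then these q+5 matrices form a commutative association scheme with q+4 classes; explicitly: (1) every entry of each of these matrices is 0 or 1; (2) their sum equals J_{(q+1)q²}; (3) A_0, A_1, A_2, A_3, A_4 are symmetric and A_{5,β}^⊤ = A_{5,−β} for each nonzero β; (4) the product of any two matrices in the family lies in the ℝ-linear span of the family; (5) any two matrices in the family commute. -/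

import Mathlib

open Matrix Kronecker BigOperators

noncomputable section

/-- The all-ones matrix. -/
def allOnes (n : Type*) : Matrix n n ℝ := Matrix.of fun _ _ => 1

/-- The auxiliary matrix `C_α` for `α ∈ F`: the `((a,u),(b,v))`-entry is `1` iff
`v − u = α·(b − a)`. -/
def auxC {F : Type*} [Field F] [Fintype F] [DecidableEq F] (α : F) :
    Matrix (F × F) (F × F) ℝ :=
  Matrix.of fun p r => if r.2 - p.2 = α * (r.1 - p.1) then 1 else 0

/-- The permutation matrix `P_{β,γ}` with `(a,b)`-entry `1` iff `β·(−a+b) = γ`. -/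
def permP {K : Type*} [Field K] [DecidableEq K] (β γ : K) : Matrix K K ℝ :=
  Matrix.of fun a b => if β * (-a + b) = γ then 1 else 0

/-- The matrix `N_β = Σ_{γ∈K∖{0}} P_{β,γ} ⊗ C_{ψ(γ)}` of the consecutive prime power
construction, where `ψ : K∖{0} → F` is a fixed bijection. -/
def NN {F K : Type*} [Field F] [Fintype F] [DecidableEq F]
    [Field K] [Fintype K] [DecidableEq K]
    (ψ : {x : K // x ≠ 0} ≃ F) (β : K) :
    Matrix (K × (F × F)) (K × (F × F)) ℝ :=
  ∑ γ : {x : K // x ≠ 0}, permP β (γ : K) ⊗ₖ auxC (ψ γ)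

/-- The family of adjacency matrices `A_0, …, A_4, A_{5,β}` (`β ∈ K∖{0}`) of the
association scheme obtained from consecutive prime powers: `A_0 = I`,
`A_1 = I_{q+1} ⊗ I_q ⊗ (J_q − I_q)`, `A_2 = I_{q+1} ⊗ (J_q − I_q) ⊗ J_q`,
`A_3 = (J_{q+1} − I_{q+1}) ⊗ I_{q²}`, `A_4 = (J_{q+1} − I_{q+1}) ⊗ I_q ⊗ (J_q − I_q)`,
and `A_{5,β} = N_β − A_3`. -/
def consA {F K : Type*} [Field F] [Fintype F] [DecidableEq F]
    [Field K] [Fintype K] [DecidableEq K]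
    (ψ : {x : K // x ≠ 0} ≃ F) :
    (Fin 5 ⊕ {x : K // x ≠ 0}) → Matrix (K × (F × F)) (K × (F × F)) ℝ
  | Sum.inl i =>
      if i = 0 then 1
      else if i = 1 then
        (1 : Matrix K K ℝ) ⊗ₖ ((1 : Matrix F F ℝ) ⊗ₖ (allOnes F - 1))
      else if i = 2 then
        (1 : Matrix K K ℝ) ⊗ₖ ((allOnes F - 1) ⊗ₖ allOnes F)
      else if i = 3 then
        (allOnes K - 1) ⊗ₖ (1 : Matrix (F × F) (F × F) ℝ)
      else (allOnes K - 1) ⊗ₖ ((1 : Matrix F F ℝ) ⊗ₖ (allOnes F - 1))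
  | Sum.inr β => NN ψ (β : K) - (allOnes K - 1) ⊗ₖ (1 : Matrix (F × F) (F × F) ℝ)

/-!
The class of a pair of points depends only on their difference, so the adjacency matrices are
circulant over `K × (F × F)`; this gives everything except closure under multiplication.

For closure, note that the `C_α` together with `C_∞ = I_q ⊗ J_q` describe the parallel classes of
the affine plane over `F`: `C_α² = q C_α`, two different ones multiply to `J`, and their sum is
`J + q I`. On the other side `P_{β,γ}` is the translation of `K` by `γ / β`, hence
`P_{β,γ} P_{β',γ} = P_{δ,γ}` with `1/δ = 1/β + 1/β'`. Expanding the product,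
`N_β N_β' = (J − I)² ⊗ J + ∑ γ, P_{β,γ} P_{β',γ} ⊗ (q C_{ψ(γ)} − J)`,
where the diagonal terms reassemble to `q N_δ` if `β + β' ≠ 0` and to `I ⊗ ∑ α, q C_α` otherwise,
up to multiples of `I ⊗ J` and `J ⊗ J`.
-/

section Span

variable {R A : Type*} [CommSemiring R] [Semiring A] [Algebra R A] {s : Set A} {a b : A}

lemma mul_mem_span_of_forall_mul_mem_span
    (h : ∀ x ∈ s, ∀ y ∈ s, x * y ∈ Submodule.span R s)
    (ha : a ∈ Submodule.span R s) (hb : b ∈ Submodule.span R s) :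
    a * b ∈ Submodule.span R s := by
  have hab := Submodule.mul_mem_mul ha hb
  rw [Submodule.span_mul_span] at hab
  exact Submodule.span_le.mpr (Set.mul_subset_iff.mpr h) hab

lemma commute_of_mem_span (h : ∀ x ∈ s, ∀ y ∈ s, Commute x y)
    (ha : a ∈ Submodule.span R s) (hb : b ∈ Submodule.span R s) : Commute a b :=
  Algebra.commute_of_mem_adjoin_of_forall_mem_commute (Algebra.span_le_adjoin R s hb) fun y hy =>
    (Algebra.commute_of_mem_adjoin_of_forall_mem_commute (Algebra.span_le_adjoin R s ha)
      fun x hx => h y hy x hx).symm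

end Span

section Kronecker

variable {ι l m n p R : Type*}

lemma sum_kronecker [NonUnitalNonAssocSemiring R] (s : Finset ι) (A : ι → Matrix l m R)
    (B : Matrix n p R) : (∑ i ∈ s, A i) ⊗ₖ B = ∑ i ∈ s, A i ⊗ₖ B := by
  ext
  simp [Matrix.sum_apply, Finset.sum_mul]

lemma kronecker_sum [NonUnitalNonAssocSemiring R] (A : Matrix l m R) (s : Finset ι)
    (B : ι → Matrix n p R) : A ⊗ₖ (∑ i ∈ s, B i) = ∑ i ∈ s, A ⊗ₖ B i := by
  ext
  simp [Matrix.sum_apply, Finset.mul_sum]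

lemma sub_kronecker [NonUnitalNonAssocRing R] (A A' : Matrix l m R) (B : Matrix n p R) :
    (A - A') ⊗ₖ B = A ⊗ₖ B - A' ⊗ₖ B := by
  ext
  simp [sub_mul]

lemma kronecker_sub [NonUnitalNonAssocRing R] (A : Matrix l m R) (B B' : Matrix n p R) :
    A ⊗ₖ (B - B') = A ⊗ₖ B - A ⊗ₖ B' := by
  ext
  simp [mul_sub]

end Kronecker

lemma allOnes_mul_allOnes (n : Type*) [Fintype n] :
    allOnes n * allOnes n = (Fintype.card n : ℝ) • allOnes n := by
  ext
  simp [allOnes, mul_apply]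

lemma allOnes_kronecker_allOnes (m n : Type*) : allOnes m ⊗ₖ allOnes n = allOnes (m × n) := by
  ext
  simp [allOnes]

section VerticalLines

variable {F : Type*} [DecidableEq F]

variable (F) in
/-- The matrix `C_∞ = I_q ⊗ J_q` of the parallel class of vertical lines of the affine plane over
`F`, complementing the parallel classes `C_α` of finite slope. -/
def auxCInf : Matrix (F × F) (F × F) ℝ := 1 ⊗ₖ allOnes F

lemma auxCInf_apply (a u b v : F) : auxCInf F (a, u) (b, v) = if a = b then 1 else 0 := by
  simp [auxCInf, allOnes, one_apply]

variable [Fintype F]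

lemma auxCInf_mul_auxCInf : auxCInf F * auxCInf F = (Fintype.card F : ℝ) • auxCInf F := by
  simp only [auxCInf, ← mul_kronecker_mul, mul_one, allOnes_mul_allOnes, kronecker_smul]

lemma auxCInf_mul_allOnes :
    auxCInf F * allOnes (F × F) = (Fintype.card F : ℝ) • allOnes (F × F) := by
  simp only [auxCInf, ← allOnes_kronecker_allOnes, ← mul_kronecker_mul, one_mul,
    allOnes_mul_allOnes, kronecker_smul]

lemma allOnes_mul_auxCInf :
    allOnes (F × F) * auxCInf F = (Fintype.card F : ℝ) • allOnes (F × F) := by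
  simp only [auxCInf, ← allOnes_kronecker_allOnes, ← mul_kronecker_mul, mul_one,
    allOnes_mul_allOnes, kronecker_smul]

end VerticalLines

section AffinePlane

variable {F : Type*} [Field F] [Fintype F] [DecidableEq F]

lemma auxC_apply (α a u b v : F) :
    auxC α (a, u) (b, v) = if v = α * (b - a) + u then 1 else 0 := by
  simp only [auxC, of_apply, sub_eq_iff_eq_add]

lemma auxC_mul_auxCInf (α : F) : auxC α * auxCInf F = allOnes (F × F) := by
  ext ⟨a, u⟩ ⟨b, v⟩
  simp [mul_apply, Fintype.sum_prod_type, auxC_apply, auxCInf_apply, allOnes]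

lemma auxC_mul_allOnes (α : F) :
    auxC α * allOnes (F × F) = (Fintype.card F : ℝ) • allOnes (F × F) := by
  ext ⟨a, u⟩ ⟨b, v⟩
  simp [mul_apply, Fintype.sum_prod_type, auxC_apply, allOnes]

lemma auxC_mul_auxC_apply (α α' a u b v : F) :
    (auxC α * auxC α') (a, u) (b, v) =
      ∑ c, if v = α' * (b - c) + (α * (c - a) + u) then 1 else 0 := by
  simp only [mul_apply, Fintype.sum_prod_type, auxC_apply, ite_mul, one_mul, zero_mul,
    Finset.sum_ite_eq', Finset.mem_univ, if_true]

lemma auxC_mul_self (α : F) : auxC α * auxC α = (Fintype.card F : ℝ) • auxC α := by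
  ext ⟨a, u⟩ ⟨b, v⟩
  have collinear (c : F) : α * (b - c) + (α * (c - a) + u) = α * (b - a) + u := by ring
  simp [auxC_mul_auxC_apply, collinear, auxC_apply]

lemma auxC_mul_auxC_of_ne {α α' : F} (h : α ≠ α') : auxC α * auxC α' = allOnes (F × F) := by
  ext ⟨a, u⟩ ⟨b, v⟩
  have meet_iff (c : F) : v = α' * (b - c) + (α * (c - a) + u) ↔
      c = (v - u - α' * b + α * a) / (α - α') := by
    rw [eq_div_iff (sub_ne_zero.mpr h)]
    constructor <;> intro hc <;> linear_combination -hc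
  simp [auxC_mul_auxC_apply, meet_iff, allOnes]

lemma auxC_mul_auxC (α α' : F) :
    auxC α * auxC α' = allOnes (F × F) +
      if α = α' then (Fintype.card F : ℝ) • auxC α - allOnes (F × F) else 0 := by
  split_ifs with h
  · rw [← h, auxC_mul_self, add_sub_cancel]
  · rw [auxC_mul_auxC_of_ne h, add_zero]

lemma sum_auxC :
    ∑ α : F, auxC α = allOnes (F × F) - auxCInf F + (Fintype.card F : ℝ) • 1 := by
  ext ⟨a, u⟩ ⟨b, v⟩
  simp only [Matrix.sum_apply, Matrix.add_apply, Matrix.sub_apply, Matrix.smul_apply, auxC_apply,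
    auxCInf_apply]
  by_cases hab : a = b
  · simp [hab, allOnes, one_apply, eq_comm]
  · have slope_iff (α : F) : v = α * (b - a) + u ↔ α = (v - u) / (b - a) := by
      rw [eq_div_iff (sub_ne_zero.mpr (Ne.symm hab)), eq_sub_iff_add_eq, eq_comm]
    simp [slope_iff, hab, allOnes, one_apply]

end AffinePlane

section Translation

variable {K : Type*} [Field K] [DecidableEq K] {β β' : K}

lemma permP_apply_of_ne_zero (hβ : β ≠ 0) (γ a b : K) :
    permP β γ a b = if b = a + γ / β then 1 else 0 := by
  simp only [permP, of_apply, mul_comm β, ← eq_div_iff hβ, neg_add_eq_iff_eq_add]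

lemma permP_zero (hβ : β ≠ 0) : permP β 0 = 1 := by
  ext
  simp [permP_apply_of_ne_zero hβ, one_apply, eq_comm]

variable [Fintype K]

lemma permP_mul_permP (hβ : β ≠ 0) (hβ' : β' ≠ 0) (γ γ' : K) :
    permP β γ * permP β' γ' = permP (β * β') (β' * γ + β * γ') := by
  ext a b
  have shift : a + γ / β + γ' / β' = a + (β' * γ + β * γ') / (β * β') := by
    field_simp
    ring
  simp only [mul_apply, permP_apply_of_ne_zero hβ, permP_apply_of_ne_zero hβ',
    permP_apply_of_ne_zero (mul_ne_zero hβ hβ'), ite_mul, one_mul, zero_mul, Finset.sum_ite_eq',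
    Finset.mem_univ, if_true, shift]

lemma permP_mul_permP_of_add_eq_zero (hβ : β ≠ 0) (hβ' : β' ≠ 0) (h : β + β' = 0) (γ : K) :
    permP β γ * permP β' γ = 1 := by
  rw [permP_mul_permP hβ hβ', ← add_mul, add_comm, h, zero_mul, permP_zero (mul_ne_zero hβ hβ')]

lemma permP_mul_permP_of_add_ne_zero (hβ : β ≠ 0) (hβ' : β' ≠ 0) (h : β + β' ≠ 0) (γ : K) :
    permP β γ * permP β' γ = permP (β * β' / (β + β')) γ := by
  ext a b
  have shift : (β' * γ + β * γ) / (β * β') = γ / (β * β' / (β + β')) := by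
    field_simp
    ring
  rw [permP_mul_permP hβ hβ', permP_apply_of_ne_zero (mul_ne_zero hβ hβ'), shift,
    permP_apply_of_ne_zero (div_ne_zero (mul_ne_zero hβ hβ') h)]

lemma permP_mul_allOnes (hβ : β ≠ 0) (γ : K) : permP β γ * allOnes K = allOnes K := by
  ext
  simp [mul_apply, permP_apply_of_ne_zero hβ, allOnes]

lemma sum_permP (hβ : β ≠ 0) :
    ∑ γ : {x : K // x ≠ 0}, permP β (γ : K) = allOnes K - 1 := by
  have sum_all : ∑ γ : K, permP β γ = allOnes K := by
    ext
    simp [Matrix.sum_apply, permP, allOnes]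
  rw [← sum_all, ← permP_zero hβ, Fintype.sum_eq_add_sum_subtype_ne _ (0 : K), add_sub_cancel_left]

end Translation

section RelationClass

variable {F K : Type*} [Field F] [DecidableEq F] [Field K]

/-- The index `i` of the relation `consA ψ i` holding between two points of `K × (F × F)` whose
difference is the given vector. -/
def relClass [DecidableEq K] (ψ : {x : K // x ≠ 0} ≃ F) : K × (F × F) → Fin 5 ⊕ {x : K // x ≠ 0}
  | (d, (a, u)) =>
    if hd : d = 0 then Sum.inl (if a = 0 then if u = 0 then 0 else 1 else 2)
    else if a = 0 then Sum.inl (if u = 0 then 3 else 4)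
    else Sum.inr ⟨ψ.symm (u / a) / d, div_ne_zero (ψ.symm (u / a)).2 hd⟩

/-- The pairing `i ↦ i'` of the indices of the scheme for which `(A_i)ᵀ = A_{i'}`. -/
def transposeIndex : Fin 5 ⊕ {x : K // x ≠ 0} → Fin 5 ⊕ {x : K // x ≠ 0} :=
  Sum.map id fun β => ⟨-(β : K), neg_ne_zero.mpr β.2⟩

lemma transposeIndex_involutive : Function.Involutive (transposeIndex (K := K)) := by
  rintro (i | β) <;> simp [transposeIndex]

lemma relClass_neg [DecidableEq K] (ψ : {x : K // x ≠ 0} ≃ F) (g : K × (F × F)) :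
    relClass ψ (-g) = transposeIndex (relClass ψ g) := by
  obtain ⟨d, a, u⟩ := g
  by_cases hd : d = 0 <;> by_cases ha : a = 0 <;>
    simp [relClass, transposeIndex, hd, ha, neg_div, div_neg]

lemma relClass_eq_inr_iff [DecidableEq K] (ψ : {x : K // x ≠ 0} ≃ F) (β : {x : K // x ≠ 0})
    {d : K} (hd : d ≠ 0) (a u : F) :
    relClass ψ (d, (a, u)) = Sum.inr β ↔ a ≠ 0 ∧ u = ψ ⟨β * d, mul_ne_zero β.2 hd⟩ * a := by
  by_cases ha : a = 0
  · simp [relClass, hd, ha]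
  · simp [relClass, hd, ha, Subtype.ext_iff, ← div_eq_iff, ← Equiv.symm_apply_eq]

end RelationClass

section Relations

variable {F K : Type*} [Field F] [Fintype F] [DecidableEq F] [Field K] [Fintype K] [DecidableEq K]
  (ψ : {x : K // x ≠ 0} ≃ F)

lemma NN_apply_of_ne {β x y : K} (h : β * (y - x) ≠ 0) (p r : F × F) :
    NN ψ β (x, p) (y, r) = auxC (ψ ⟨β * (y - x), h⟩) p r := by
  simp only [NN, Matrix.sum_apply, kroneckerMap_apply, permP, of_apply, neg_add_eq_sub]
  rw [Fintype.sum_eq_single ⟨β * (y - x), h⟩]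
  · simp
  · intro γ hγ
    have hne : β * (y - x) ≠ γ := fun h' => hγ (Subtype.ext h'.symm)
    rw [if_neg hne, zero_mul]

lemma NN_apply_self (β x : K) (p r : F × F) : NN ψ β (x, p) (x, r) = 0 := by
  simp only [NN, Matrix.sum_apply, kroneckerMap_apply, permP, of_apply]
  exact Finset.sum_eq_zero fun γ _ => by simp [γ.2.symm]

lemma consA_inr_apply (β : {x : K // x ≠ 0}) (p r : K × (F × F)) :
    consA ψ (Sum.inr β) p r = if relClass ψ (r - p) = Sum.inr β then 1 else 0 := by
  obtain ⟨x, a, u⟩ := p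
  obtain ⟨y, b, v⟩ := r
  by_cases hxy : x = y
  · simp [consA, NN_apply_self, relClass, hxy, allOnes]
  have hd : y - x ≠ 0 := sub_ne_zero.mpr (Ne.symm hxy)
  simp only [consA, Matrix.sub_apply, NN_apply_of_ne ψ (mul_ne_zero β.2 hd), Prod.mk_sub_mk,
    relClass_eq_inr_iff ψ β hd]
  by_cases hab : a = b
  · simp [auxC, allOnes, one_apply, hxy, hab, sub_eq_zero, eq_comm]
  · simp [auxC, allOnes, one_apply, hxy, hab, sub_eq_zero, Ne.symm hab]

lemma consA_inl_apply (i : Fin 5) (p r : K × (F × F)) :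
    consA ψ (Sum.inl i) p r = if relClass ψ (r - p) = Sum.inl i then 1 else 0 := by
  obtain ⟨x, a, u⟩ := p
  obtain ⟨y, b, v⟩ := r
  by_cases hxy : y = x <;> by_cases hab : b = a <;> by_cases huv : v = u <;> fin_cases i <;>
    simp [consA, relClass, allOnes, one_apply, sub_eq_zero, hxy, hab, huv, eq_comm (a := x),
      eq_comm (a := a), eq_comm (a := u)]

lemma consA_apply (i : Fin 5 ⊕ {x : K // x ≠ 0}) (p r : K × (F × F)) :
    consA ψ i p r = if relClass ψ (r - p) = i then 1 else 0 := by
  rcases i with i | β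
  exacts [consA_inl_apply ψ i p r, consA_inr_apply ψ β p r]

lemma consA_apply_eq_zero_or_one (i : Fin 5 ⊕ {x : K // x ≠ 0}) (p r : K × (F × F)) :
    consA ψ i p r = 0 ∨ consA ψ i p r = 1 := by
  rw [consA_apply]
  exact (ite_eq_or_eq _ _ _).symm

lemma sum_consA : ∑ i, consA ψ i = allOnes (K × (F × F)) := by
  ext p r
  simp only [Matrix.sum_apply, consA_apply, Finset.sum_ite_eq, Finset.mem_univ, if_true, allOnes,
    of_apply]

lemma consA_transpose (i : Fin 5 ⊕ {x : K // x ≠ 0}) :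
    (consA ψ i)ᵀ = consA ψ (transposeIndex i) := by
  ext p r
  rw [transpose_apply, consA_apply, consA_apply, ← neg_sub r p, relClass_neg]
  simp only [transposeIndex_involutive.eq_iff]

lemma consA_eq_circulant (i : Fin 5 ⊕ {x : K // x ≠ 0}) :
    consA ψ i = circulant fun g => if relClass ψ (-g) = i then 1 else 0 := by
  ext p r
  rw [consA_apply, circulant_apply, neg_sub]

lemma consA_mul_comm (i j : Fin 5 ⊕ {x : K // x ≠ 0}) :
    consA ψ i * consA ψ j = consA ψ j * consA ψ i := by
  simp only [consA_eq_circulant, circulant_mul_comm]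

end Relations

section Products

variable {F K : Type*} [Field F] [Fintype F] [DecidableEq F] [Field K] [Fintype K] [DecidableEq K]
  (ψ : {x : K // x ≠ 0} ≃ F) {β β' : K}

lemma NN_mul_kronecker (β : K) (X : Matrix K K ℝ) (Y : Matrix (F × F) (F × F) ℝ) :
    NN ψ β * (X ⊗ₖ Y) = ∑ γ : {x : K // x ≠ 0}, (permP β (γ : K) * X) ⊗ₖ (auxC (ψ γ) * Y) := by
  simp only [NN, Finset.sum_mul, ← mul_kronecker_mul]

lemma NN_mul_kronecker_of_auxC_mul (hβ : β ≠ 0) (X : Matrix K K ℝ)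
    {Y Z : Matrix (F × F) (F × F) ℝ} (h : ∀ α, auxC α * Y = Z) :
    NN ψ β * (X ⊗ₖ Y) = ((allOnes K - 1) * X) ⊗ₖ Z := by
  simp only [NN_mul_kronecker, h, ← sum_kronecker, ← Finset.sum_mul, sum_permP hβ]

lemma NN_mul_allOnes_kronecker_one (hβ : β ≠ 0) :
    NN ψ β * (allOnes K ⊗ₖ 1) =
      allOnes K ⊗ₖ (allOnes (F × F) - auxCInf F + (Fintype.card F : ℝ) • 1) := by
  simp only [NN_mul_kronecker, permP_mul_allOnes hβ, mul_one, ← kronecker_sum,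
    Equiv.sum_comp ψ auxC, sum_auxC]

lemma NN_mul_NN (hβ : β ≠ 0) (hβ' : β' ≠ 0) :
    NN ψ β * NN ψ β' =
      ((allOnes K - 1) * (allOnes K - 1)) ⊗ₖ allOnes (F × F) +
        ∑ γ : {x : K // x ≠ 0}, (permP β (γ : K) * permP β' (γ : K)) ⊗ₖ
          ((Fintype.card F : ℝ) • auxC (ψ γ) - allOnes (F × F)) := by
  have expand : NN ψ β * NN ψ β' = ∑ γ : {x : K // x ≠ 0}, ∑ γ' : {x : K // x ≠ 0},
      ((permP β (γ : K) * permP β' (γ' : K)) ⊗ₖ allOnes (F × F) +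
        if γ = γ' then (permP β (γ : K) * permP β' (γ' : K)) ⊗ₖ
          ((Fintype.card F : ℝ) • auxC (ψ γ) - allOnes (F × F)) else 0) := by
    simp only [NN, Finset.sum_mul_sum, ← mul_kronecker_mul, auxC_mul_auxC, ψ.injective.eq_iff,
      kronecker_add]
    congr! 3
    split_ifs <;> simp only [kronecker_zero]
  simp only [expand, Finset.sum_add_distrib, ← sum_kronecker, ← Finset.sum_mul_sum, sum_permP hβ,
    sum_permP hβ', Finset.sum_ite_eq, Finset.mem_univ, if_true]

lemma NN_mul_NN_of_add_eq_zero (hβ : β ≠ 0) (hβ' : β' ≠ 0) (h : β + β' = 0) :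
    NN ψ β * NN ψ β' =
      ((allOnes K - 1) * (allOnes K - 1)) ⊗ₖ allOnes (F × F) +
        1 ⊗ₖ ((Fintype.card F : ℝ) • ((Fintype.card F : ℝ) • 1 - auxCInf F)) := by
  have sum_coeff : ∑ γ, ((Fintype.card F : ℝ) • auxC (ψ γ) - allOnes (F × F)) =
      (Fintype.card F : ℝ) • ((Fintype.card F : ℝ) • 1 - auxCInf F) := by
    rw [Equiv.sum_comp ψ fun α => (Fintype.card F : ℝ) • auxC α - allOnes (F × F),
      Finset.sum_sub_distrib, ← Finset.smul_sum, sum_auxC, Finset.sum_const, Finset.card_univ]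
    module
  simp only [NN_mul_NN ψ hβ hβ', permP_mul_permP_of_add_eq_zero hβ hβ' h, ← kronecker_sum,
    sum_coeff]

lemma NN_mul_NN_of_add_ne_zero (hβ : β ≠ 0) (hβ' : β' ≠ 0) (h : β + β' ≠ 0) :
    NN ψ β * NN ψ β' =
      ((allOnes K - 1) * (allOnes K - 1)) ⊗ₖ allOnes (F × F) +
        ((Fintype.card F : ℝ) • NN ψ (β * β' / (β + β')) -
          (allOnes K - 1) ⊗ₖ allOnes (F × F)) := by
  rw [NN_mul_NN ψ hβ hβ']
  simp only [permP_mul_permP_of_add_ne_zero hβ hβ' h, kronecker_sub, kronecker_smul,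
    Finset.sum_sub_distrib, ← Finset.smul_sum, ← sum_kronecker, NN,
    sum_permP (div_ne_zero (mul_ne_zero hβ hβ') h)]

end Products

section FactorSpans

variable (K F : Type*) [DecidableEq K] [DecidableEq F]

/-- The span of `I` and `J` on `K`: the left Kronecker factors of the matrices `A_0, …, A_4`. -/
def outerSpan : Submodule ℝ (Matrix K K ℝ) := Submodule.span ℝ {1, allOnes K}

/-- The span of `I`, `C_∞` and `J` on `F × F`: the right Kronecker factors of the matrices
`A_0, …, A_4`. -/
def innerSpan : Submodule ℝ (Matrix (F × F) (F × F) ℝ) :=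
  Submodule.span ℝ {1, auxCInf F, allOnes (F × F)}

lemma one_mem_outerSpan : 1 ∈ outerSpan K := Submodule.subset_span (by simp)

lemma allOnes_mem_outerSpan : allOnes K ∈ outerSpan K := Submodule.subset_span (by simp)

lemma allOnes_sub_one_mem_outerSpan : allOnes K - 1 ∈ outerSpan K :=
  sub_mem (allOnes_mem_outerSpan K) (one_mem_outerSpan K)

lemma one_mem_innerSpan : 1 ∈ innerSpan F := Submodule.subset_span (by simp)

lemma auxCInf_mem_innerSpan : auxCInf F ∈ innerSpan F := Submodule.subset_span (by simp)

lemma allOnes_mem_innerSpan : allOnes (F × F) ∈ innerSpan F := Submodule.subset_span (by simp)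

variable {K F}

lemma mul_mem_outerSpan [Fintype K] {X X' : Matrix K K ℝ} (hX : X ∈ outerSpan K)
    (hX' : X' ∈ outerSpan K) : X * X' ∈ outerSpan K := by
  refine mul_mem_span_of_forall_mul_mem_span ?_ hX hX'
  rintro _ (rfl | rfl) _ (rfl | rfl) <;> simp only [one_mul, mul_one, allOnes_mul_allOnes]
  exacts [one_mem_outerSpan K, allOnes_mem_outerSpan K, allOnes_mem_outerSpan K,
    Submodule.smul_mem _ _ (allOnes_mem_outerSpan K)]

lemma mul_mem_innerSpan [Fintype F] {Y Y' : Matrix (F × F) (F × F) ℝ} (hY : Y ∈ innerSpan F)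
    (hY' : Y' ∈ innerSpan F) : Y * Y' ∈ innerSpan F := by
  refine mul_mem_span_of_forall_mul_mem_span ?_ hY hY'
  have one_mem := one_mem_innerSpan F
  have auxCInf_mem := auxCInf_mem_innerSpan F
  have allOnes_mem := allOnes_mem_innerSpan F
  rintro _ (rfl | rfl | rfl) _ (rfl | rfl | rfl) <;>
    simp only [one_mul, mul_one, auxCInf_mul_auxCInf, auxCInf_mul_allOnes, allOnes_mul_auxCInf,
      allOnes_mul_allOnes]
  exacts [one_mem, auxCInf_mem, allOnes_mem, auxCInf_mem, Submodule.smul_mem _ _ auxCInf_mem,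
    Submodule.smul_mem _ _ allOnes_mem, allOnes_mem, Submodule.smul_mem _ _ allOnes_mem,
    Submodule.smul_mem _ _ allOnes_mem]

end FactorSpans

section Closure

variable {F K : Type*} [Field F] [Fintype F] [DecidableEq F] [Field K] [Fintype K] [DecidableEq K]
  (ψ : {x : K // x ≠ 0} ≃ F)

/-- A spanning set of the span of the `A_i` whose products, unlike those of the `A_i` themselves,
are given by short formulas. -/
def schemeGenerators : Set (Matrix (K × (F × F)) (K × (F × F)) ℝ) :=
  Set.image2 (· ⊗ₖ ·) {1, allOnes K} {1, auxCInf F, allOnes (F × F)} ∪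
    Set.range fun β : {x : K // x ≠ 0} => NN ψ β

lemma kronecker_mem_span_schemeGenerators {X : Matrix K K ℝ} {Y : Matrix (F × F) (F × F) ℝ}
    (hX : X ∈ outerSpan K) (hY : Y ∈ innerSpan F) :
    X ⊗ₖ Y ∈ Submodule.span ℝ (schemeGenerators ψ) := by
  have hXY := Submodule.apply_mem_map₂ (kroneckerBilinear (R := ℝ) (α := ℝ)) hX hY
  rw [outerSpan, innerSpan, Submodule.map₂_span_span] at hXY
  exact Submodule.span_mono Set.subset_union_left hXY

lemma NN_mem_span_schemeGenerators {β : K} (hβ : β ≠ 0) :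
    NN ψ β ∈ Submodule.span ℝ (schemeGenerators ψ) :=
  Submodule.subset_span (Or.inr ⟨⟨β, hβ⟩, rfl⟩)

lemma consA_inl_zero : consA ψ (Sum.inl 0) = 1 ⊗ₖ 1 := by
  simp [consA]

lemma consA_inl_one : consA ψ (Sum.inl 1) = 1 ⊗ₖ (auxCInf F - 1) := by
  simp [consA, auxCInf, kronecker_sub]

lemma consA_inl_two : consA ψ (Sum.inl 2) = 1 ⊗ₖ (allOnes (F × F) - auxCInf F) := by
  simp [consA, auxCInf, sub_kronecker, allOnes_kronecker_allOnes]

lemma consA_inl_three : consA ψ (Sum.inl 3) = (allOnes K - 1) ⊗ₖ 1 := rfl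

lemma consA_inl_four : consA ψ (Sum.inl 4) = (allOnes K - 1) ⊗ₖ (auxCInf F - 1) := by
  simp [consA, auxCInf, kronecker_sub]

lemma consA_mem_span_schemeGenerators (i : Fin 5 ⊕ {x : K // x ≠ 0}) :
    consA ψ i ∈ Submodule.span ℝ (schemeGenerators ψ) := by
  have block_mem {X : Matrix K K ℝ} {Y : Matrix (F × F) (F × F) ℝ} (hX : X ∈ outerSpan K)
      (hY : Y ∈ innerSpan F) := kronecker_mem_span_schemeGenerators ψ hX hY
  have one_mem := one_mem_innerSpan F
  have auxCInf_mem := auxCInf_mem_innerSpan F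
  rcases i with i | β
  · fin_cases i
    · exact consA_inl_zero ψ ▸ block_mem (one_mem_outerSpan K) one_mem
    · exact consA_inl_one ψ ▸ block_mem (one_mem_outerSpan K) (sub_mem auxCInf_mem one_mem)
    · exact consA_inl_two ψ ▸
        block_mem (one_mem_outerSpan K) (sub_mem (allOnes_mem_innerSpan F) auxCInf_mem)
    · exact consA_inl_three ψ ▸ block_mem (allOnes_sub_one_mem_outerSpan K) one_mem
    · exact consA_inl_four ψ ▸
        block_mem (allOnes_sub_one_mem_outerSpan K) (sub_mem auxCInf_mem one_mem)
  · exact sub_mem (NN_mem_span_schemeGenerators ψ β.2)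
      (block_mem (allOnes_sub_one_mem_outerSpan K) one_mem)

lemma schemeGenerators_subset_span_consA :
    schemeGenerators ψ ⊆ Submodule.span ℝ (Set.range (consA ψ)) := by
  have consA_mem (i : Fin 5 ⊕ {x : K // x ≠ 0}) :
      consA ψ i ∈ Submodule.span ℝ (Set.range (consA ψ)) := Submodule.subset_span ⟨i, rfl⟩
  have NN_mem (β : {x : K // x ≠ 0}) : NN ψ β ∈ Submodule.span ℝ (Set.range (consA ψ)) := by
    rw [← sub_add_cancel (NN ψ (β : K)) ((allOnes K - 1) ⊗ₖ 1)]
    exact add_mem (consA_mem (Sum.inr β)) (consA_mem (Sum.inl 3))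
  have one_one_mem : 1 ⊗ₖ 1 ∈ Submodule.span ℝ (Set.range (consA ψ)) :=
    consA_inl_zero ψ ▸ consA_mem (Sum.inl 0)
  have one_auxCInf_mem : 1 ⊗ₖ auxCInf F ∈ Submodule.span ℝ (Set.range (consA ψ)) := by
    rw [← sub_add_cancel (auxCInf F) 1, kronecker_add, ← consA_inl_one ψ]
    exact add_mem (consA_mem _) one_one_mem
  have one_allOnes_mem : 1 ⊗ₖ allOnes (F × F) ∈ Submodule.span ℝ (Set.range (consA ψ)) := by
    rw [← sub_add_cancel (allOnes (F × F)) (auxCInf F), kronecker_add, ← consA_inl_two ψ]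
    exact add_mem (consA_mem _) one_auxCInf_mem
  have allOnes_one_mem : allOnes K ⊗ₖ 1 ∈ Submodule.span ℝ (Set.range (consA ψ)) := by
    rw [← sub_add_cancel (allOnes K) 1, add_kronecker, ← consA_inl_three ψ]
    exact add_mem (consA_mem _) one_one_mem
  have allOnes_auxCInf_mem :
      allOnes K ⊗ₖ auxCInf F ∈ Submodule.span ℝ (Set.range (consA ψ)) := by
    rw [← sub_add_cancel (auxCInf F) 1, kronecker_add, ← sub_add_cancel (allOnes K) 1,
      add_kronecker _ _ (auxCInf F - 1), ← consA_inl_four ψ, ← consA_inl_one ψ, sub_add_cancel]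
    exact add_mem (add_mem (consA_mem _) (consA_mem _)) allOnes_one_mem
  have allOnes_allOnes_mem :
      allOnes K ⊗ₖ allOnes (F × F) ∈ Submodule.span ℝ (Set.range (consA ψ)) := by
    rw [allOnes_kronecker_allOnes, ← sum_consA ψ]
    exact sum_mem fun i _ => consA_mem i
  rintro _ (⟨X, rfl | rfl, Y, rfl | rfl | rfl, rfl⟩ | ⟨β, rfl⟩)
  exacts [one_one_mem, one_auxCInf_mem, one_allOnes_mem, allOnes_one_mem, allOnes_auxCInf_mem,
    allOnes_allOnes_mem, NN_mem β]

lemma span_schemeGenerators :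
    Submodule.span ℝ (schemeGenerators ψ) = Submodule.span ℝ (Set.range (consA ψ)) :=
  le_antisymm (Submodule.span_le.mpr (schemeGenerators_subset_span_consA ψ))
    (Submodule.span_le.mpr (Set.range_subset_iff.mpr (consA_mem_span_schemeGenerators ψ)))

lemma commute_of_mem_schemeGenerators {M N : Matrix (K × (F × F)) (K × (F × F)) ℝ}
    (hM : M ∈ schemeGenerators ψ) (hN : N ∈ schemeGenerators ψ) : Commute M N := by
  refine commute_of_mem_span (R := ℝ) ?_ (schemeGenerators_subset_span_consA ψ hM)
    (schemeGenerators_subset_span_consA ψ hN)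
  rintro _ ⟨i, rfl⟩ _ ⟨j, rfl⟩
  exact consA_mul_comm ψ i j

lemma NN_mul_kronecker_mem_span {β : K} (hβ : β ≠ 0) {X : Matrix K K ℝ}
    {Y : Matrix (F × F) (F × F) ℝ} (hX : X ∈ ({1, allOnes K} : Set (Matrix K K ℝ)))
    (hY : Y ∈ ({1, auxCInf F, allOnes (F × F)} : Set (Matrix (F × F) (F × F) ℝ))) :
    NN ψ β * (X ⊗ₖ Y) ∈ Submodule.span ℝ (schemeGenerators ψ) := by
  have allOnes_sub_one_mul_mem : (allOnes K - 1) * X ∈ outerSpan K :=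
    mul_mem_outerSpan (allOnes_sub_one_mem_outerSpan K) (Submodule.subset_span hX)
  have allOnes_mem := allOnes_mem_innerSpan F
  rcases hY with rfl | rfl | rfl
  · rcases hX with rfl | rfl
    · rw [one_kronecker_one, mul_one]
      exact NN_mem_span_schemeGenerators ψ hβ
    · rw [NN_mul_allOnes_kronecker_one ψ hβ]
      exact kronecker_mem_span_schemeGenerators ψ (allOnes_mem_outerSpan K) <|
        add_mem (sub_mem allOnes_mem (auxCInf_mem_innerSpan F))
          (Submodule.smul_mem _ _ (one_mem_innerSpan F))
  · rw [NN_mul_kronecker_of_auxC_mul ψ hβ X auxC_mul_auxCInf]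
    exact kronecker_mem_span_schemeGenerators ψ allOnes_sub_one_mul_mem allOnes_mem
  · rw [NN_mul_kronecker_of_auxC_mul ψ hβ X auxC_mul_allOnes]
    exact kronecker_mem_span_schemeGenerators ψ allOnes_sub_one_mul_mem
      (Submodule.smul_mem _ _ allOnes_mem)

lemma NN_mul_NN_mem_span {β β' : K} (hβ : β ≠ 0) (hβ' : β' ≠ 0) :
    NN ψ β * NN ψ β' ∈ Submodule.span ℝ (schemeGenerators ψ) := by
  have outer_mem := allOnes_sub_one_mem_outerSpan K
  have square_mem : ((allOnes K - 1) * (allOnes K - 1)) ⊗ₖ allOnes (F × F) ∈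
      Submodule.span ℝ (schemeGenerators ψ) :=
    kronecker_mem_span_schemeGenerators ψ (mul_mem_outerSpan outer_mem outer_mem)
      (allOnes_mem_innerSpan F)
  by_cases h : β + β' = 0
  · rw [NN_mul_NN_of_add_eq_zero ψ hβ hβ' h]
    exact add_mem square_mem <|
      kronecker_mem_span_schemeGenerators ψ (one_mem_outerSpan K) <| Submodule.smul_mem _ _ <|
        sub_mem (Submodule.smul_mem _ _ (one_mem_innerSpan F)) (auxCInf_mem_innerSpan F)
  · rw [NN_mul_NN_of_add_ne_zero ψ hβ hβ' h]
    exact add_mem square_mem <| sub_mem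
      (Submodule.smul_mem _ _ <|
        NN_mem_span_schemeGenerators ψ (div_ne_zero (mul_ne_zero hβ hβ') h))
      (kronecker_mem_span_schemeGenerators ψ outer_mem (allOnes_mem_innerSpan F))

lemma mul_mem_span_schemeGenerators {M N : Matrix (K × (F × F)) (K × (F × F)) ℝ}
    (hM : M ∈ schemeGenerators ψ) (hN : N ∈ schemeGenerators ψ) :
    M * N ∈ Submodule.span ℝ (schemeGenerators ψ) := by
  rcases hM with ⟨X, hX, Y, hY, rfl⟩ | ⟨β, rfl⟩
  · rcases hN with ⟨X', hX', Y', hY', rfl⟩ | ⟨β, rfl⟩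
    · rw [← mul_kronecker_mul]
      exact kronecker_mem_span_schemeGenerators ψ
        (mul_mem_outerSpan (Submodule.subset_span hX) (Submodule.subset_span hX'))
        (mul_mem_innerSpan (Submodule.subset_span hY) (Submodule.subset_span hY'))
    · rw [commute_of_mem_schemeGenerators ψ (Or.inl ⟨X, hX, Y, hY, rfl⟩)
        (Or.inr ⟨β, rfl⟩)]
      exact NN_mul_kronecker_mem_span ψ β.2 hX hY
  · rcases hN with ⟨X, hX, Y, hY, rfl⟩ | ⟨β', rfl⟩
    · exact NN_mul_kronecker_mem_span ψ β.2 hX hY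
    · exact NN_mul_NN_mem_span ψ β.2 β'.2

lemma consA_mul_consA_mem_span (i j : Fin 5 ⊕ {x : K // x ≠ 0}) :
    consA ψ i * consA ψ j ∈ Submodule.span ℝ (Set.range (consA ψ)) := by
  rw [← span_schemeGenerators]
  exact mul_mem_span_of_forall_mul_mem_span
    (fun _ hM _ hN => mul_mem_span_schemeGenerators ψ hM hN)
    (consA_mem_span_schemeGenerators ψ i) (consA_mem_span_schemeGenerators ψ j)

end Closure

/-- The matrices `A_0, …, A_4, A_{5,β}` (`β ∈ K∖{0}`) form a commutative association
scheme with `q+4` classes: they are `(0,1)`-matrices summing to the all-ones matrix,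
the family is closed under transposition (`A_0, …, A_4` are symmetric and
`A_{5,β}ᵀ = A_{5,−β}`), the product of any two members lies in the linear span of the
family, and any two members commute. -/
theorem cons_association_scheme {F K : Type*} [Field F] [Fintype F] [DecidableEq F]
    [Field K] [Fintype K] [DecidableEq K]
    (hcard : Fintype.card K = Fintype.card F + 1)
    (ψ : {x : K // x ≠ 0} ≃ F) :
    (∀ i p r, consA ψ i p r = 0 ∨ consA ψ i p r = 1) ∧
    (∑ i, consA ψ i) = allOnes (K × (F × F)) ∧
    ((∀ i : Fin 5, (consA ψ (Sum.inl i))ᵀ = consA ψ (Sum.inl i)) ∧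
      ∀ β : {x : K // x ≠ 0},
        (consA ψ (Sum.inr β))ᵀ = consA ψ (Sum.inr ⟨-(β : K), neg_ne_zero.mpr β.2⟩)) ∧
    (∀ i j, consA ψ i * consA ψ j ∈ Submodule.span ℝ (Set.range (consA ψ))) ∧
    (∀ i j, consA ψ i * consA ψ j = consA ψ j * consA ψ i) := by
  exact ⟨consA_apply_eq_zero_or_one ψ, sum_consA ψ,
    ⟨fun i => consA_transpose ψ (Sum.inl i), fun β => consA_transpose ψ (Sum.inr β)⟩,
    consA_mul_consA_mem_span ψ, consA_mul_comm ψ⟩
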